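/- Let 0 < α < 1. Then −Γ(−α) · x² · E_{α,α}(−x) → 1 as x → ∞ (x real, x > 0). In other words, the scaled function 𝔈_{α,α}(x) = −Γ(−α) x² E_{α,α}(−x) has asymptotic value 1 at infinity. (Here Γ(−α) < 0 since 0 < α < 1, so −Γ(−α) > 0.) -/

import Mathlib

/-!
Bromwich's integral `1 / Γ(β) = (2π)⁻¹ ∫ e^s s^(-β)` over a vertical line `re s = σ`, summed against
a geometric series, writes `E_{α,β}(z)` as the integral of `e^s s^(-β) (1 - z s^(-α))⁻¹` when
`β > 1` and `σ` is large. For `z = -x ≤ 0` and `0 < α < 2` the values of `s^(-α)` on the right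
half-plane stay in the sector `|arg| ≤ πα/2 < π`, so `1 + x s^(-α)` is bounded away from `0`
uniformly in `x`. The line may therefore be moved to `σ = 1`, which bounds `E_{α,β}(-x)`
independently of `x`.

The integral does not converge absolutely for small `β`. The bound is carried there by
`1 / Γ(s) = s / Γ(s + 1)`, which expresses `E_{α,β}` through functions with parameter `β + 1`, at
the cost of higher powers `(1 - z s^(-α))^(-(n+1))`: hence the Prabhakar functions.

Finally, splitting off the first terms of the series of `E_{α,β-Nα}(z)` leaves `z^N E_{α,β}(z)`, so
boundedness for every `β` already forces decay and the full asymptotic expansion in `1 / x`. For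
`β = α` the `1 / x` coefficient `1 / Γ(0)` vanishes and the `1 / x²` coefficient is `-1 / Γ(-α)`.
-/

open Asymptotics Complex Filter MeasureTheory ProbabilityTheory Set
open scoped FourierTransform Interval Real Topology

/-! ### Bromwich's integral for the reciprocal Gamma function -/

theorem integrableOn_rpow_mul_exp_neg_mul {β r : ℝ} (hβ : 0 < β) (hr : 0 < r) :
    IntegrableOn (fun t : ℝ => t ^ (β - 1) * Real.exp (-(r * t))) (Ioi 0) := by
  simpa [neg_mul] using
    integrableOn_rpow_mul_exp_neg_mul_rpow (s := β - 1) (by linarith) one_pos hr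

theorem differentiableOn_integral_rpow_mul_cexp_neg_mul_Ioi {β : ℝ} (hβ : 0 < β) :
    DifferentiableOn ℂ (fun s : ℂ => ∫ t in Ioi (0 : ℝ), ((t ^ (β - 1) : ℝ) : ℂ) * cexp (-(s * t)))
      {s | 0 < s.re} := by
  set μ : Measure ℝ := (volume.restrict (Ioi 0)).withDensity fun t => (t ^ (β - 1)).toNNReal
  have hmeas : Measurable fun t : ℝ => (t ^ (β - 1)).toNNReal := by fun_prop
  have hmgf (s : ℂ) : complexMGF (fun t => -t) μ s =
      ∫ t in Ioi (0 : ℝ), ((t ^ (β - 1) : ℝ) : ℂ) * cexp (-(s * t)) := by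
    rw [complexMGF, integral_withDensity_eq_integral_smul hmeas]
    refine setIntegral_congr_fun measurableSet_Ioi fun t ht => ?_
    simp [NNReal.smul_def, Real.rpow_nonneg (mem_Ioi.1 ht).le]
  have hexp : Ioi 0 ⊆ integrableExpSet (fun t : ℝ => -t) μ := fun r hr => by
    rw [integrableExpSet, mem_ofPred_eq, integrable_withDensity_iff_integrable_smul hmeas]
    refine (integrableOn_rpow_mul_exp_neg_mul hβ hr).congr_fun (fun t ht => ?_) measurableSet_Ioi
    simp [NNReal.smul_def, Real.rpow_nonneg (mem_Ioi.1 ht).le]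
  simp_rw [← hmgf]
  exact differentiableOn_complexMGF.mono fun s hs => interior_maximal hexp isOpen_Ioi hs

theorem integral_rpow_mul_cexp_neg_mul_Ioi {β : ℝ} (hβ : 0 < β) {s : ℂ} (hs : 0 < s.re) :
    ∫ t in Ioi (0 : ℝ), ((t ^ (β - 1) : ℝ) : ℂ) * cexp (-(s * t)) =
      s ^ (-β : ℂ) * Real.Gamma β := by
  have hopen : IsOpen {s : ℂ | 0 < s.re} := isOpen_lt continuous_const continuous_re
  have hright : DifferentiableOn ℂ (fun s : ℂ => s ^ (-β : ℂ) * Real.Gamma β) {s | 0 < s.re} :=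
    fun s hs => ((differentiableAt_id.cpow_const (.inl hs)).mul_const _).differentiableWithinAt
  have hreal {r : ℝ} (hr : 0 < r) :
      ∫ t in Ioi (0 : ℝ), ((t ^ (β - 1) : ℝ) : ℂ) * cexp (-(r * t)) =
        (r : ℂ) ^ (-β : ℂ) * Real.Gamma β := by
    have h := congrArg ((↑) : ℝ → ℂ) (Real.integral_rpow_mul_exp_neg_mul_Ioi hβ hr)
    rw [← integral_complex_ofReal, one_div, Real.inv_rpow hr.le, ← Real.rpow_neg hr.le] at h
    simpa [ofReal_cpow hr.le] using h
  have hfreq : ∃ᶠ z : ℂ in 𝓝[≠] 1, ∫ t in Ioi (0 : ℝ), ((t ^ (β - 1) : ℝ) : ℂ) * cexp (-(z * t)) =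
      z ^ (-β : ℂ) * Real.Gamma β := by
    have hlim : Tendsto ((↑) : ℝ → ℂ) (𝓝[>] 1) (𝓝[≠] 1) :=
      tendsto_nhdsWithin_iff.2 ⟨continuous_ofReal.continuousAt.mono_left nhdsWithin_le_nhds,
        eventually_mem_nhdsWithin.mono fun r hr => by simpa using hr.ne'⟩
    exact hlim.frequently <| Eventually.frequently <| eventually_mem_nhdsWithin.mono fun r hr =>
      hreal (one_pos.trans hr)
  exact ((differentiableOn_integral_rpow_mul_cexp_neg_mul_Ioi hβ).analyticOnNhd hopen
    ).eqOn_of_preconnected_of_frequently_eq (hright.analyticOnNhd hopen)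
      (convex_halfSpace_re_gt 0).isPreconnected (by simp) hfreq hs

theorem integrable_norm_ofReal_add_mul_I_rpow {σ r : ℝ} (hσ : 0 < σ) (hr : 1 < r) :
    Integrable fun y : ℝ => ‖(σ + y * I : ℂ)‖ ^ (-r) := by
  have hbase : Integrable fun y : ℝ => (1 + ‖y‖ ^ 2) ^ (-r / 2) :=
    integrable_rpow_neg_one_add_norm_sq (by simpa using hr)
  refine ((hbase.comp_div hσ.ne').const_mul (σ ^ (-r))).congr (.of_forall fun y => ?_)
  have hsq : σ ^ 2 + y ^ 2 = σ ^ 2 * (1 + ‖y / σ‖ ^ 2) := by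
    rw [Real.norm_eq_abs, sq_abs]; field_simp
  beta_reduce
  rw [norm_add_mul_I, hsq, Real.sqrt_mul (by positivity), Real.sqrt_sq hσ.le,
    Real.mul_rpow hσ.le (by positivity), Real.sqrt_eq_rpow, ← Real.rpow_mul (by positivity)]
  ring_nf

theorem continuous_ofReal_add_mul_I_cpow {σ : ℝ} (hσ : 0 < σ) (c : ℂ) :
    Continuous fun y : ℝ => (σ + y * I : ℂ) ^ c :=
  .cpow (by fun_prop) continuous_const fun _ => .inl (by simpa using hσ)

theorem integrable_ofReal_add_mul_I_cpow {σ r : ℝ} (hσ : 0 < σ) (hr : 1 < r) :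
    Integrable fun y : ℝ => (σ + y * I : ℂ) ^ (-r : ℂ) :=
  (integrable_norm_ofReal_add_mul_I_rpow hσ hr).mono'
    (continuous_ofReal_add_mul_I_cpow hσ _).aestronglyMeasurable
    (.of_forall fun y => by rw [← ofReal_neg, norm_cpow_real])

theorem norm_cexp_mul_cpow_neg (s : ℂ) (β : ℝ) :
    ‖cexp s * s ^ (-β : ℂ)‖ = Real.exp s.re * ‖s‖ ^ (-β) := by
  rw [norm_mul, norm_exp, ← ofReal_neg, norm_cpow_real]

theorem integrable_norm_cexp_mul_cpow_neg {σ β : ℝ} (hσ : 0 < σ) (hβ : 1 < β) :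
    Integrable fun y : ℝ => ‖cexp (σ + y * I) * (σ + y * I : ℂ) ^ (-β : ℂ)‖ := by
  simpa only [norm_cexp_mul_cpow_neg, add_re, ofReal_re, re_ofReal_mul, I_re, mul_zero, add_zero]
    using (integrable_norm_ofReal_add_mul_I_rpow hσ hβ).const_mul (Real.exp σ)

theorem fourier_max_zero_rpow_mul_exp {σ β : ℝ} (hσ : 0 < σ) (hβ : 1 < β) (w : ℝ) :
    𝓕 (fun t : ℝ => ((max t 0 ^ (β - 1) * Real.exp (-(σ * t)) : ℝ) : ℂ)) w =
      (σ + (2 * π * w : ℝ) * I : ℂ) ^ (-β : ℂ) * Real.Gamma β := by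
  rw [← integral_rpow_mul_cexp_neg_mul_Ioi (one_pos.trans hβ) (by simpa using hσ),
    Real.fourier_real_eq_integral_exp_smul]
  refine (setIntegral_eq_integral_of_forall_compl_eq_zero fun t ht => ?_).symm.trans
    (setIntegral_congr_fun measurableSet_Ioi fun t ht => ?_)
  · simp [max_eq_right (notMem_Ioi.1 ht), Real.zero_rpow (sub_pos.2 hβ).ne']
  · rw [max_eq_left (mem_Ioi.1 ht).le]
    push_cast
    rw [smul_eq_mul, mul_left_comm, ← Complex.exp_add]
    ring_nf

theorem integrable_max_zero_rpow_mul_exp {σ β : ℝ} (hσ : 0 < σ) (hβ : 1 < β) :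
    Integrable fun t : ℝ => max t 0 ^ (β - 1) * Real.exp (-(σ * t)) := by
  refine (integrableOn_iff_integrable_of_support_subset fun t ht => ?_).1 <|
    (integrableOn_rpow_mul_exp_neg_mul (one_pos.trans hβ) hσ).congr_fun (fun t ht => ?_)
      measurableSet_Ioi
  · contrapose! ht
    simp [max_eq_right (notMem_Ioi.1 ht), Real.zero_rpow (sub_pos.2 hβ).ne']
  · rw [max_eq_left (mem_Ioi.1 ht).le]

theorem integral_cexp_mul_cpow_neg {σ β : ℝ} (hσ : 0 < σ) (hβ : 1 < β) :
    ∫ y : ℝ, cexp (σ + y * I) * (σ + y * I : ℂ) ^ (-β : ℂ) = 2 * π / Real.Gamma β := by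
  set f : ℝ → ℂ := fun t => ((max t 0 ^ (β - 1) * Real.exp (-(σ * t)) : ℝ) : ℂ) with hf
  have hcont : Continuous f := continuous_ofReal.comp <|
    ((continuous_id.max continuous_const).rpow_const fun _ => .inr (sub_pos.2 hβ).le).mul
      (by fun_prop)
  have hfourier : 𝓕 f = fun w => (σ + (2 * π * w : ℝ) * I : ℂ) ^ (-β : ℂ) * Real.Gamma β :=
    funext (fourier_max_zero_rpow_mul_exp hσ hβ)
  have hinv : 𝓕⁻ (𝓕 f) 1 = f 1 :=
    congrFun (hcont.fourierInv_fourier_eq (integrable_max_zero_rpow_mul_exp hσ hβ).ofReal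
      (hfourier ▸ ((integrable_ofReal_add_mul_I_cpow hσ hβ).comp_mul_left'
        (by positivity)).mul_const _)) 1
  have hΓ : (Real.Gamma β : ℂ) ≠ 0 :=
    ofReal_ne_zero.2 (Real.Gamma_pos_of_pos (one_pos.trans hβ)).ne'
  calc ∫ y : ℝ, cexp (σ + y * I) * (σ + y * I : ℂ) ^ (-β : ℂ)
      = 2 * π * ∫ w : ℝ, cexp (σ + (2 * π * w : ℝ) * I) *
          (σ + (2 * π * w : ℝ) * I : ℂ) ^ (-β : ℂ) := by
        rw [Measure.integral_comp_mul_left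
          (fun y : ℝ => cexp (σ + y * I) * (σ + y * I : ℂ) ^ (-β : ℂ)), abs_of_pos (by positivity),
          real_smul, ofReal_inv, ofReal_mul, ofReal_ofNat, mul_inv_cancel_left₀ (by simp)]
    _ = 2 * π * (cexp σ / Real.Gamma β * 𝓕⁻ (𝓕 f) 1) := by
        rw [hfourier, Real.fourierInv_eq']
        congr 1
        rw [← integral_const_mul]
        congr with w
        rw [Complex.exp_add]
        simp only [RCLike.inner_apply, one_mul, conj_trivial, smul_eq_mul]
        field_simp
    _ = 2 * π / Real.Gamma β := by
        rw [hinv, hf]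
        simp only [zero_le_one, sup_of_le_left, Real.one_rpow, one_mul, mul_one, ofReal_exp,
          ofReal_neg]
        rw [div_mul_eq_mul_div, ← Complex.exp_add, add_neg_cancel, Complex.exp_zero, mul_one_div]

/-! ### Moving vertical contours -/

section VerticalContours

variable {E : Type*} [NormedAddCommGroup E] [NormedSpace ℂ E] {F : ℂ → E} {g : ℝ → ℝ} {a b : ℝ}

theorem tendsto_intervalIntegral_horizontal (hg : Tendsto g atTop (𝓝 0))
    (hFg : ∀ s : ℂ, s.re ∈ [[a, b]] → ‖F s‖ ≤ g |s.im|) {l : Filter ℝ} {τ : ℝ → ℝ}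
    (hτ : Tendsto (fun T => |τ T|) l atTop) :
    Tendsto (fun T => ∫ x in a..b, F (x + τ T * I)) l (𝓝 0) := by
  have hbound (T : ℝ) : ‖∫ x in a..b, F (x + τ T * I)‖ ≤ g |τ T| * |b - a| :=
    intervalIntegral.norm_integral_le_of_norm_le_const fun x hx => by
      simpa using hFg (x + τ T * I) (by simpa using uIoc_subset_uIcc hx)
  exact squeeze_zero_norm hbound (by simpa using (hg.comp hτ).mul_const |b - a|)

theorem integral_vertical_eq_of_differentiableOn
    (hF : DifferentiableOn ℂ F ([[a, b]] ×ℂ univ)) (ha : VerticalIntegrable F a)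
    (hb : VerticalIntegrable F b) (hg : Tendsto g atTop (𝓝 0))
    (hFg : ∀ s : ℂ, s.re ∈ [[a, b]] → ‖F s‖ ≤ g |s.im|) :
    ∫ y : ℝ, F (a + y * I) = ∫ y : ℝ, F (b + y * I) := by
  have hrect (T : ℝ) : (∫ x in a..b, F (x + (-T : ℝ) * I)) - (∫ x in a..b, F (x + T * I)) +
      I • ((∫ y in (-T)..T, F (b + y * I)) - ∫ y in (-T)..T, F (a + y * I)) = 0 := by
    have h := integral_boundary_rect_eq_zero_of_differentiableOn F ⟨a, -T⟩ ⟨b, T⟩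
      (hF.mono (reProdIm_subset_iff.2 (prod_mono subset_rfl (subset_univ _))))
    rwa [smul_sub, ← add_sub_assoc]
  have hvert {c : ℝ} (hc : VerticalIntegrable F c volume) :
      Tendsto (fun T => ∫ y in (-T)..T, F (c + y * I)) atTop (𝓝 (∫ y : ℝ, F (c + y * I))) :=
    intervalIntegral_tendsto_integral hc tendsto_neg_atTop_atBot tendsto_id
  have hlim := ((tendsto_intervalIntegral_horizontal (τ := Neg.neg) hg hFg
    (by simpa using tendsto_abs_atTop_atTop)).sub
      (tendsto_intervalIntegral_horizontal (τ := id) hg hFg tendsto_abs_atTop_atTop)).add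
        (((hvert hb).sub (hvert ha)).const_smul I)
  have hzero := tendsto_nhds_unique hlim (tendsto_const_nhds.congr fun T => (hrect T).symm)
  exact (sub_eq_zero.1 (by simpa using hzero)).symm

end VerticalContours

/-! ### Integral representation of Prabhakar functions -/

theorem norm_ofReal_add_mul_I_cpow_le {σ α : ℝ} (hσ : 0 < σ) (hα : 0 ≤ α) (y : ℝ) :
    ‖(σ + y * I : ℂ) ^ (-α : ℂ)‖ ≤ σ ^ (-α) := by
  rw [← ofReal_neg, norm_cpow_real]
  refine Real.rpow_le_rpow_of_nonpos hσ ?_ (neg_nonpos.2 hα)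
  simpa [abs_of_pos hσ] using abs_re_le_norm (σ + y * I)

theorem hasSum_div_Gamma {a : ℕ → ℂ} {α β σ : ℝ} (hα : 0 ≤ α) (hβ : 1 < β) (hσ : 0 < σ)
    (ha : Summable fun k => ‖a k‖ * (σ ^ (-α)) ^ k) :
    HasSum (fun k : ℕ => a k / Real.Gamma (α * k + β)) ((2 * π : ℂ)⁻¹ * ∫ y : ℝ,
      cexp (σ + y * I) * (σ + y * I : ℂ) ^ (-β : ℂ) *
        ∑' k, a k * ((σ + y * I : ℂ) ^ (-α : ℂ)) ^ k) := by
  set e : ℝ → ℂ := fun y => cexp (σ + y * I) * (σ + y * I : ℂ) ^ (-β : ℂ)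
  set p : ℝ → ℂ := fun y => (σ + y * I : ℂ) ^ (-α : ℂ)
  have he : Continuous e := .mul (by fun_prop) (continuous_ofReal_add_mul_I_cpow hσ _)
  have hp : Continuous p := continuous_ofReal_add_mul_I_cpow hσ _
  have hterm (k : ℕ) : ∫ y, e y * (a k * p y ^ k) = 2 * π * (a k / Real.Gamma (α * k + β)) := by
    have hβk : 1 < α * k + β := by nlinarith [mul_nonneg hα k.cast_nonneg]
    rw [← mul_div_assoc, mul_div_right_comm, ← integral_cexp_mul_cpow_neg hσ hβk,
      ← integral_mul_const]
    congr with y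
    have hs : (σ + y * I : ℂ) ≠ 0 := fun h => hσ.ne' (by simpa using congrArg re h)
    rw [ofReal_add, neg_add_rev, cpow_add _ _ hs, ofReal_mul, ofReal_natCast, ← neg_mul,
      mul_comm _ (k : ℂ), cpow_nat_mul]
    ring
  have hnorm (k : ℕ) (y : ℝ) : ‖a k * p y ^ k‖ ≤ ‖a k‖ * (σ ^ (-α)) ^ k := by
    rw [norm_mul, norm_pow]
    gcongr
    exact norm_ofReal_add_mul_I_cpow_le hσ hα y
  have hsum := hasSum_integral_of_dominated_convergence (μ := volume)
    (F := fun k y => e y * (a k * p y ^ k))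
    (fun k y => ‖e y‖ * (‖a k‖ * (σ ^ (-α)) ^ k))
    (fun k => (he.mul (continuous_const.mul (hp.pow k))).aestronglyMeasurable)
    (fun k => .of_forall fun y => by rw [norm_mul]; gcongr; exact hnorm k y)
    (.of_forall fun y => ha.mul_left _)
    (by simpa only [tsum_mul_left] using (integrable_norm_cexp_mul_cpow_neg hσ hβ).mul_const _)
    (.of_forall fun y => (Summable.of_norm_bounded ha fun k => hnorm k y).hasSum.mul_left (e y))
  have hpi : (2 * π : ℂ) ≠ 0 := mul_ne_zero two_ne_zero (ofReal_ne_zero.2 Real.pi_ne_zero)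
  simpa only [hterm, inv_mul_cancel_left₀ hpi, tsum_mul_left] using hsum.mul_left (2 * π : ℂ)⁻¹

-- `|sin φ|` is the distance from `-1` to the line through `0` and `exp (φ * I)`.
theorem abs_sin_le_norm_one_add {w : ℂ} {φ : ℝ} (hw : Real.cos φ * ‖w‖ ≤ w.re) :
    |Real.sin φ| ≤ ‖1 + w‖ := by
  refine abs_le_of_sq_le_sq ?_ (norm_nonneg _)
  calc Real.sin φ ^ 2 ≤ Real.sin φ ^ 2 + (Real.cos φ + ‖w‖) ^ 2 :=
        le_add_of_nonneg_right (sq_nonneg _)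
    _ = 1 + 2 * (Real.cos φ * ‖w‖) + ‖w‖ ^ 2 := by rw [Real.sin_sq]; ring
    _ ≤ 1 + 2 * w.re + ‖w‖ ^ 2 := by gcongr
    _ = ‖1 + w‖ ^ 2 := by
      rw [← normSq_eq_norm_sq, ← normSq_eq_norm_sq, normSq_add, map_one]
      simp only [one_mul, conj_re]
      ring

theorem cos_mul_norm_cpow_neg_le_re {α : ℝ} (hα0 : 0 ≤ α) (hα2 : α ≤ 2) {s : ℂ} (hs : 0 ≤ s.re) :
    Real.cos (π * α / 2) * ‖s ^ (-α : ℂ)‖ ≤ (s ^ (-α : ℂ)).re := by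
  have harg : |s.arg * -α| ≤ π * α / 2 := by
    rw [abs_mul, abs_neg, abs_of_nonneg hα0]
    nlinarith [abs_arg_le_pi_div_two_iff.2 hs]
  rw [← ofReal_neg, norm_cpow_real, cpow_ofReal_re, mul_comm, ← Real.cos_abs (s.arg * -α)]
  gcongr
  exact Real.cos_le_cos_of_nonneg_of_le_pi (abs_nonneg _) (by nlinarith [Real.pi_pos]) harg

theorem sin_le_norm_one_add_mul_cpow_neg {α x : ℝ} (hα0 : 0 ≤ α) (hα2 : α ≤ 2) (hx : 0 ≤ x) {s : ℂ}
    (hs : 0 ≤ s.re) : Real.sin (π * α / 2) ≤ ‖1 + x * s ^ (-α : ℂ)‖ := by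
  refine (le_abs_self _).trans (abs_sin_le_norm_one_add ?_)
  rw [norm_mul, norm_real, Real.norm_of_nonneg hx, re_ofReal_mul, mul_left_comm]
  exact mul_le_mul_of_nonneg_left (cos_mul_norm_cpow_neg_le_re hα0 hα2 hs) hx

/-- The Prabhakar (three-parameter Mittag-Leffler) function `E^γ_{α,β}` on the real line, for
`γ = n + 1` a positive integer, where `(γ)_k / k!` is the binomial coefficient
`(k + n).choose n`. The case `n = 0` is the Mittag-Leffler function; larger `n` arise when `β` is
lowered by `1`. -/
noncomputable def prabhakar (α β : ℝ) (n : ℕ) (z : ℝ) : ℝ :=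
  ∑' k : ℕ, (k + n).choose n * z ^ k / Real.Gamma (α * k + β)

/-- The integrand of the inverse Laplace transform representing `prabhakar α β n z`: for `β > 1`
and large `σ`, its integral along the vertical line `re s = σ`, divided by `2π`, is
`prabhakar α β n z`. The powers of `s` are principal branches. -/
noncomputable def prabhakarKernel (α β : ℝ) (n : ℕ) (z : ℝ) (s : ℂ) : ℂ :=
  cexp s * s ^ (-β : ℂ) * (1 / (1 - z * s ^ (-α : ℂ)) ^ (n + 1))

theorem hasSum_prabhakar_of_mul_rpow_lt_one {α β σ z : ℝ} (hα : 0 ≤ α) (hβ : 1 < β) (hσ : 0 < σ)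
    (n : ℕ) (hz : |z| * σ ^ (-α) < 1) :
    HasSum (fun k : ℕ => (((k + n).choose n * z ^ k / Real.Gamma (α * k + β) : ℝ) : ℂ))
      ((2 * π : ℂ)⁻¹ * ∫ y : ℝ, prabhakarKernel α β n z (σ + y * I)) := by
  have hgeom (y : ℝ) : ‖z * (σ + y * I : ℂ) ^ (-α : ℂ)‖ < 1 := by
    rw [norm_mul, norm_real]
    exact (mul_le_mul_of_nonneg_left (norm_ofReal_add_mul_I_cpow_le hσ hα y)
      (abs_nonneg z)).trans_lt hz
  have ha : Summable fun k : ℕ => ‖((k + n).choose n * z ^ k : ℂ)‖ * (σ ^ (-α)) ^ k := by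
    simpa [mul_pow, mul_assoc] using
      summable_choose_mul_geometric_of_norm_lt_one n (r := |z| * σ ^ (-α))
        (by rwa [Real.norm_of_nonneg (by positivity)])
  have hsum := hasSum_div_Gamma hα hβ hσ ha
  simp only [mul_assoc _ ((z : ℂ) ^ _), ← mul_pow,
    tsum_choose_mul_geometric_of_norm_lt_one n (hgeom _)] at hsum
  push_cast
  exact hsum

theorem sin_pi_mul_div_two_pos {α : ℝ} (hα0 : 0 < α) (hα2 : α < 2) : 0 < Real.sin (π * α / 2) :=
  Real.sin_pos_of_pos_of_lt_pi (by positivity) (by nlinarith [Real.pi_pos])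

section NegativeArgument

variable {α x : ℝ}

theorem norm_prabhakarKernel_neg_le (hα0 : 0 < α) (hα2 : α < 2) (hx : 0 ≤ x) (β : ℝ)
    (n : ℕ) {s : ℂ} (hs : 0 ≤ s.re) : ‖prabhakarKernel α β n (-x) s‖ ≤
      ‖cexp s * s ^ (-β : ℂ)‖ * (1 / Real.sin (π * α / 2) ^ (n + 1)) := by
  have hsin := sin_pi_mul_div_two_pos hα0 hα2
  rw [prabhakarKernel, norm_mul, norm_div, norm_one, norm_pow, ofReal_neg, neg_mul, sub_neg_eq_add]
  gcongr
  exact sin_le_norm_one_add_mul_cpow_neg hα0.le hα2.le hx hs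

theorem differentiableOn_prabhakarKernel_neg (hα0 : 0 < α) (hα2 : α < 2) (hx : 0 ≤ x)
    (β : ℝ) (n : ℕ) : DifferentiableOn ℂ (prabhakarKernel α β n (-x)) {s | 0 < s.re} := by
  intro s hs
  have hden : 1 - ((-x : ℝ) : ℂ) * s ^ (-α : ℂ) ≠ 0 := by
    rw [ofReal_neg, neg_mul, sub_neg_eq_add, ← norm_pos_iff]
    exact (sin_pi_mul_div_two_pos hα0 hα2).trans_le
      (sin_le_norm_one_add_mul_cpow_neg hα0.le hα2.le hx (le_of_lt hs))
  have hpow (c : ℂ) : DifferentiableAt ℂ (fun s : ℂ => s ^ c) s :=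
    differentiableAt_id.cpow_const (.inl hs)
  exact ((differentiableAt_exp.mul (hpow _)).mul ((differentiableAt_const _).div
    (((hpow _).const_mul _).const_sub _ |>.pow _) (pow_ne_zero _ hden))).differentiableWithinAt

theorem verticalIntegrable_prabhakarKernel_neg {β σ : ℝ} (hα0 : 0 < α) (hα2 : α < 2)
    (hβ : 1 < β) (hσ : 0 < σ) (hx : 0 ≤ x) (n : ℕ) :
    VerticalIntegrable (prabhakarKernel α β n (-x)) σ := by
  have hcont : Continuous fun y : ℝ => prabhakarKernel α β n (-x) (σ + y * I) :=
    (differentiableOn_prabhakarKernel_neg hα0 hα2 hx β n).continuousOn.comp_continuous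
      (by fun_prop) fun y => by simpa using hσ
  exact ((integrable_norm_cexp_mul_cpow_neg hσ hβ).mul_const _).mono' hcont.aestronglyMeasurable
    (.of_forall fun y => norm_prabhakarKernel_neg_le hα0 hα2 hx β n (by simpa using hσ.le))

theorem integral_prabhakarKernel_neg_eq {β a b : ℝ} (hα0 : 0 < α) (hα2 : α < 2) (hβ : 1 < β)
    (ha : 0 < a) (hab : a ≤ b) (hx : 0 ≤ x) (n : ℕ) :
    ∫ y : ℝ, prabhakarKernel α β n (-x) (a + y * I) =
      ∫ y : ℝ, prabhakarKernel α β n (-x) (b + y * I) := by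
  have hstrip : [[a, b]] ×ℂ univ ⊆ {s : ℂ | 0 < s.re} := fun s hs =>
    ha.trans_le (uIcc_of_le hab ▸ hs.1).1
  refine integral_vertical_eq_of_differentiableOn (g := fun T =>
      Real.exp b * max a T ^ (-β) * (1 / Real.sin (π * α / 2) ^ (n + 1)))
    ((differentiableOn_prabhakarKernel_neg hα0 hα2 hx β n).mono hstrip)
    (verticalIntegrable_prabhakarKernel_neg hα0 hα2 hβ ha hx n)
    (verticalIntegrable_prabhakarKernel_neg hα0 hα2 hβ (ha.trans_le hab) hx n) ?_ fun s hs => ?_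
  · have hmax : Tendsto (max a) atTop atTop := tendsto_atTop_mono (le_max_right a) tendsto_id
    simpa using (((tendsto_rpow_neg_atTop (one_pos.trans hβ)).comp hmax).const_mul
      (Real.exp b)).mul_const (1 / Real.sin (π * α / 2) ^ (n + 1))
  · obtain ⟨has, hsb⟩ := uIcc_of_le hab ▸ hs
    have hsin := sin_pi_mul_div_two_pos hα0 hα2
    refine (norm_prabhakarKernel_neg_le hα0 hα2 hx β n (ha.le.trans has)).trans ?_
    rw [norm_cexp_mul_cpow_neg]
    gcongr Real.exp ?_ * ?_ * _
    exact Real.rpow_le_rpow_of_nonpos (lt_max_of_lt_left ha)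
      (max_le (has.trans (re_le_norm s)) (abs_im_le_norm s))
      (neg_nonpos.2 (zero_le_one.trans hβ.le))

theorem exists_one_le_mul_rpow_neg_lt_one (hα : 0 < α) (r : ℝ) :
    ∃ σ : ℝ, 1 ≤ σ ∧ r * σ ^ (-α) < 1 := by
  have hlim : Tendsto (fun σ : ℝ => r * σ ^ (-α)) atTop (𝓝 0) := by
    simpa using (tendsto_rpow_neg_atTop hα).const_mul r
  exact ((eventually_ge_atTop 1).and (hlim.eventually_lt_const one_pos)).exists

theorem prabhakar_neg_eq_integral {β : ℝ} (hα0 : 0 < α) (hα2 : α < 2) (hβ : 1 < β)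
    (hx : 0 ≤ x) (n : ℕ) : (prabhakar α β n (-x) : ℂ) =
      (2 * π : ℂ)⁻¹ * ∫ y : ℝ, prabhakarKernel α β n (-x) ((1 : ℝ) + y * I) := by
  obtain ⟨σ, hσ1, hσ⟩ := exists_one_le_mul_rpow_neg_lt_one hα0 |-x|
  rw [integral_prabhakarKernel_neg_eq hα0 hα2 hβ one_pos hσ1 hx, prabhakar, ofReal_tsum]
  exact (hasSum_prabhakar_of_mul_rpow_lt_one hα0.le hβ (one_pos.trans_le hσ1) n hσ).tsum_eq

theorem prabhakar_neg_isBigO_one_of_one_lt {β : ℝ} (hα0 : 0 < α) (hα2 : α < 2) (hβ : 1 < β)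
    (n : ℕ) : (fun x => prabhakar α β n (-x)) =O[atTop] (1 : ℝ → ℝ) := by
  refine .of_bound (‖(2 * π : ℂ)⁻¹‖ * ∫ y : ℝ, ‖cexp ((1 : ℝ) + y * I) *
    ((1 : ℝ) + y * I : ℂ) ^ (-β : ℂ)‖ * (1 / Real.sin (π * α / 2) ^ (n + 1))) ?_
  filter_upwards [eventually_ge_atTop 0] with x hx
  rw [← norm_real, prabhakar_neg_eq_integral hα0 hα2 hβ hx, norm_mul, Pi.one_apply, norm_one,
    mul_one]
  gcongr
  exact norm_integral_le_of_norm_le ((integrable_norm_cexp_mul_cpow_neg one_pos hβ).mul_const _)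
    (.of_forall fun y => norm_prabhakarKernel_neg_le hα0 hα2 hx β n (by simp))

end NegativeArgument

/-! ### Asymptotics of the Mittag-Leffler function -/

theorem forall_of_forall_gt_of_add_one {p : ℝ → Prop} {b : ℝ} (hgt : ∀ β, b < β → p β)
    (hadd : ∀ β, p (β + 1) → p β) (β : ℝ) : p β := by
  have hnat (m : ℕ) : ∀ β, b < β + m → p β := by
    induction m with
    | zero => simpa using hgt
    | succ m ih => exact fun β hm => hadd β (ih (β + 1) (by push_cast at hm; linarith))
  obtain ⟨m, hm⟩ := exists_nat_gt (b - β)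
  exact hnat m β (by linarith)

theorem inv_Gamma_eq_self_mul_inv_Gamma_add_one (s : ℝ) :
    (Real.Gamma s)⁻¹ = s * (Real.Gamma (s + 1))⁻¹ := by
  rcases eq_or_ne s 0 with rfl | hs
  · simp
  · rw [Real.Gamma_add_one hs, mul_inv, mul_inv_cancel_left₀ hs]

theorem choose_mul_pow_div_Gamma_eq (α β z : ℝ) (n k : ℕ) :
    (k + n).choose n * z ^ k / Real.Gamma (α * k + β) =
      (β - α * (n + 1)) * ((k + n).choose n * z ^ k / Real.Gamma (α * k + (β + 1))) +
        α * (n + 1) * ((k + (n + 1)).choose (n + 1) * z ^ k / Real.Gamma (α * k + (β + 1))) := by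
  have hchoose : ((k + n + 1) * (k + n).choose n : ℝ) = (k + n + 1).choose (n + 1) * (n + 1) := by
    exact_mod_cast Nat.add_one_mul_choose_eq (k + n) n
  rw [div_eq_mul_inv, inv_Gamma_eq_self_mul_inv_Gamma_add_one, ← add_assoc, ← add_assoc]
  linear_combination (α * z ^ k * (Real.Gamma (α * k + β + 1))⁻¹) * hchoose

theorem summable_prabhakar {α : ℝ} (hα : 0 < α) (β : ℝ) (n : ℕ) (z : ℝ) :
    Summable fun k : ℕ => (k + n).choose n * z ^ k / Real.Gamma (α * k + β) := by
  revert n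
  refine forall_of_forall_gt_of_add_one (b := 1) (p := fun β => ∀ n, Summable fun k : ℕ =>
    (k + n).choose n * z ^ k / Real.Gamma (α * k + β)) (fun β hβ n => ?_) (fun β hs n => ?_) β
  · obtain ⟨σ, hσ1, hσ⟩ := exists_one_le_mul_rpow_neg_lt_one hα |z|
    exact summable_ofReal.1 (hasSum_prabhakar_of_mul_rpow_lt_one hα.le hβ
      (one_pos.trans_le hσ1) n hσ).summable
  · simp_rw [choose_mul_pow_div_Gamma_eq α β]
    exact ((hs n).mul_left _).add ((hs (n + 1)).mul_left _)

theorem prabhakar_eq_add_one {α : ℝ} (hα : 0 < α) (β : ℝ) (n : ℕ) (z : ℝ) :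
    prabhakar α β n z = (β - α * (n + 1)) * prabhakar α (β + 1) n z +
      α * (n + 1) * prabhakar α (β + 1) (n + 1) z := by
  have hs := summable_prabhakar hα (β + 1)
  simp only [prabhakar, choose_mul_pow_div_Gamma_eq α β, ← tsum_mul_left]
  exact ((hs n z).mul_left _).tsum_add ((hs (n + 1) z).mul_left _)

theorem prabhakar_neg_isBigO_one {α : ℝ} (hα0 : 0 < α) (hα2 : α < 2) (β : ℝ) (n : ℕ) :
    (fun x => prabhakar α β n (-x)) =O[atTop] (1 : ℝ → ℝ) := by
  revert n
  refine forall_of_forall_gt_of_add_one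
    (fun β hβ => prabhakar_neg_isBigO_one_of_one_lt hα0 hα2 hβ) (fun β hO n => ?_) β
  simp_rw [prabhakar_eq_add_one hα0 β]
  exact ((hO n).const_mul_left _).add ((hO (n + 1)).const_mul_left _)

/-- The two-parameter Mittag-Leffler function `E_{α,β}` on the real line. Terms at the poles of the
Gamma function vanish, because `Real.Gamma` and division by zero both take the value `0` there. -/
noncomputable def mittagLeffler (α β z : ℝ) : ℝ := ∑' k : ℕ, z ^ k / Real.Gamma (α * k + β)

theorem prabhakar_zero (α β z : ℝ) : prabhakar α β 0 z = mittagLeffler α β z := by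
  simp [prabhakar, mittagLeffler]

theorem mittagLeffler_eq_sum_add {α : ℝ} (hα : 0 < α) (β z : ℝ) (N : ℕ) :
    mittagLeffler α β z = (∑ k ∈ Finset.range N, z ^ k / Real.Gamma (α * k + β)) +
      z ^ N * mittagLeffler α (β + N * α) z := by
  have hs : Summable fun k : ℕ => z ^ k / Real.Gamma (α * k + β) := by
    simpa using summable_prabhakar hα β 0 z
  rw [mittagLeffler, ← hs.sum_add_tsum_nat_add N, mittagLeffler, ← tsum_mul_left]
  congr! 3 with k
  push_cast
  ring_nf

theorem tendsto_mittagLeffler_neg_atTop {α : ℝ} (hα0 : 0 < α) (hα2 : α < 2) (β : ℝ) :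
    Tendsto (fun x => mittagLeffler α β (-x)) atTop (𝓝 0) := by
  have hO : (fun x => (Real.Gamma (β - α))⁻¹ - mittagLeffler α (β - α) (-x)) =O[atTop]
      (1 : ℝ → ℝ) := by
    simp_rw [← prabhakar_zero]
    exact (isBigO_const_const _ one_ne_zero _).sub (prabhakar_neg_isBigO_one hα0 hα2 _ 0)
  have hlim := hO.mul_isLittleO ((isLittleO_one_iff ℝ).2 tendsto_inv_atTop_zero)
  refine ((isLittleO_one_iff ℝ).1 (by simpa using hlim)).congr' ?_
  filter_upwards [eventually_ne_atTop 0] with x hx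
  have hrec : mittagLeffler α (β - α) (-x) =
      (Real.Gamma (β - α))⁻¹ - x * mittagLeffler α β (-x) := by
    simpa [sub_eq_add_neg] using mittagLeffler_eq_sum_add hα0 (β - α) (-x) 1
  rw [hrec, sub_sub_cancel, mul_comm x, mul_inv_cancel_right₀ hx]

theorem tendsto_pow_mul_mittagLeffler_neg_add_sum {α : ℝ} (hα0 : 0 < α) (hα2 : α < 2) (β : ℝ)
    (N : ℕ) : Tendsto (fun x => (-x) ^ N * mittagLeffler α β (-x) +
      ∑ k ∈ Finset.range N, (-x) ^ k / Real.Gamma (α * k + (β - N * α))) atTop (𝓝 0) := by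
  refine (tendsto_mittagLeffler_neg_atTop hα0 hα2 (β - N * α)).congr fun x => ?_
  rw [mittagLeffler_eq_sum_add hα0 _ _ N, sub_add_cancel, add_comm]

theorem scaled_mittagLeffler_tendsto_one_beta_eq_alpha_general {α : ℝ} (hα0 : 0 < α) (hα2 : α < 2)
    (hα1 : α ≠ 1) :
    Tendsto (fun x => -Real.Gamma (-α) * x ^ 2 * mittagLeffler α α (-x)) atTop (𝓝 1) := by
  have hΓ : Real.Gamma (-α) ≠ 0 := Real.Gamma_ne_zero fun m hm => by
    obtain rfl : α = m := neg_injective hm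
    norm_cast at hα0 hα2 hα1
    omega
  have hlim : Tendsto (fun x => x ^ 2 * mittagLeffler α α (-x) + (Real.Gamma (-α))⁻¹)
      atTop (𝓝 0) := by
    refine (tendsto_pow_mul_mittagLeffler_neg_add_sum hα0 hα2 α 2).congr fun x => ?_
    have hpole : α - 2 * α = -α := by ring
    simp [Finset.sum_range_succ, hpole]
  have hscaled := (hlim.const_mul (-Real.Gamma (-α))).add_const 1
  rw [mul_zero, zero_add] at hscaled
  refine hscaled.congr fun x => ?_
  field_simp
  ring

/-- For `0 < α < 1`, the scaled Mittag-Leffler function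
`-Γ(-α)·x²·E_{α,α}(-x)` tends to `1` as `x → ∞`. -/
theorem scaled_mittagLeffler_tendsto_one_beta_eq_alpha
    (α : ℝ) (hα0 : 0 < α) (hα1 : α < 1) :
    Filter.Tendsto
      (fun x : ℝ => -Real.Gamma (-α) * x ^ 2 * ∑' k : ℕ, (-x) ^ k / Real.Gamma (α * k + α))
      Filter.atTop (nhds 1) :=
  scaled_mittagLeffler_tendsto_one_beta_eq_alpha_general hα0 (hα1.trans one_lt_two) hα1.ne
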